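/- (α-representation of the free evolution kernel; Lemma 2.1 of the paper, identity part.) For every integer m ≥ 1, every t > 0, every η > 0 and all momenta p₀, …, p_m ∈ ℝ³, the function α ↦ e^{−iαt} ∏_{j=0}^{m} (α − |p_j|²/2 + iη)^{−1} is absolutely integrable on ℝ, and K(t; p₀, …, p_m) = (i/(2π)) e^{ηt} ∫_ℝ e^{−iαt} ∏_{j=0}^{m} (α − |p_j|²/2 + iη)^{−1} dα. -/

import Mathlib

noncomputable section

open MeasureTheory Complex

abbrev E3 := EuclideanSpace ℝ (Fin 3)

/-- Integration of a function over the simplex `{(s₀,…,s_b) : s_j ≥ 0, s₀+⋯+s_b = t}`,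
parametrized by `(s₀,…,s_{b-1}) ∈ [0,∞)^b` with `s_b := t - (s₀+⋯+s_{b-1}) ≥ 0`. -/
def simplexInt (b : ℕ) (t : ℝ) (F : (Fin (b + 1) → ℝ) → ℂ) : ℂ :=
  ∫ s : Fin b → ℝ,
    Set.indicator {s : Fin b → ℝ | (∀ j, 0 ≤ s j) ∧ (∑ j, s j) ≤ t}
      (fun s => F (Fin.snoc s (t - ∑ j, s j))) s

/-- The free evolution kernel `K(t; p₀, …, p_m)`. -/
def freeKernel (m : ℕ) (t : ℝ) (p : Fin (m + 1) → E3) : ℂ :=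
  (-Complex.I) ^ m *
    simplexInt m t (fun s =>
      Complex.exp (-Complex.I * ∑ j : Fin (m + 1), (s j : ℂ) * ((‖p j‖ ^ 2 / 2 : ℝ) : ℂ)))

open scoped FourierTransform

/-- The exponential `x ↦ exp (-z x)`, cut off to `x ≥ 0`. -/
def causalExp (z : ℂ) : ℝ → ℂ :=
  Set.indicator (Set.Ici 0) fun x => Complex.exp (-z * x)

lemma measurable_causalExp (z : ℂ) : Measurable (causalExp z) :=
  Measurable.indicator (by fun_prop) measurableSet_Ici

lemma integrable_causalExp {z : ℂ} (hz : 0 < z.re) : Integrable (causalExp z) := by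
  rw [causalExp, integrable_indicator_iff measurableSet_Ici, integrableOn_Ici_iff_integrableOn_Ioi]
  exact integrableOn_exp_mul_complex_Ioi (by simpa using hz) 0

lemma norm_causalExp_le_one {z : ℂ} (hz : 0 ≤ z.re) (x : ℝ) : ‖causalExp z x‖ ≤ 1 := by
  rw [causalExp, Set.indicator_apply]
  split_ifs with hx
  · rw [Complex.norm_exp, Real.exp_le_one_iff]
    simpa using mul_nonneg hz hx
  · simp

lemma continuousAt_causalExp (z : ℂ) {x : ℝ} (hx : x ≠ 0) : ContinuousAt (causalExp z) x := by
  rcases hx.lt_or_gt with hx | hx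
  · refine (continuousAt_const (y := (0 : ℂ))).congr ?_
    filter_upwards [Iio_mem_nhds hx] with y hy
    exact (Set.indicator_of_notMem (by simpa using hy) _).symm
  · have : ContinuousAt (fun x : ℝ => Complex.exp (-z * x)) x := by fun_prop
    refine this.congr ?_
    filter_upwards [Ioi_mem_nhds hx] with y hy
    have hy' : y ∈ Set.Ici (0 : ℝ) := (Set.mem_Ioi.1 hy).le
    rw [causalExp, Set.indicator_of_mem hy']

lemma fourier_causalExp {z : ℂ} (hz : 0 < z.re) (w : ℝ) :
    𝓕 (causalExp z) w = (z + 2 * Real.pi * w * I)⁻¹ := by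
  have h : ∀ x : ℝ, Complex.exp (↑(-2 * Real.pi * x * w) * I) • causalExp z x =
      Set.indicator (Set.Ici 0) (fun x : ℝ => Complex.exp (-(z + 2 * Real.pi * w * I) * x)) x := by
    intro x
    rw [causalExp, Set.indicator_apply, Set.indicator_apply]
    split_ifs
    · rw [smul_eq_mul, ← Complex.exp_add]
      push_cast
      ring_nf
    · simp
  simp_rw [Real.fourier_real_eq_integral_exp_smul, h]
  rw [integral_indicator measurableSet_Ici, integral_Ici_eq_integral_Ioi,
    integral_exp_mul_complex_Ioi (by simpa using hz)]
  rw [ofReal_zero, mul_zero, Complex.exp_zero, neg_div_neg_eq, one_div]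

/-- The iterated convolution of the functions `causalExp (z j)`. -/
def causalConv {m : ℕ} (z : Fin (m + 1) → ℂ) (t : ℝ) : ℂ :=
  ∫ s : Fin m → ℝ, (∏ j, causalExp (z j.castSucc) (s j)) *
    causalExp (z (Fin.last m)) (t - ∑ j, s j)

lemma integrable_prod_causalExp {ι : Type*} [Fintype ι] {z : ι → ℂ} (hz : ∀ j, 0 < (z j).re) :
    Integrable fun s : ι → ℝ => ∏ j, causalExp (z j) (s j) :=
  Integrable.fintype_prod fun j => integrable_causalExp (hz j)

lemma integrable_causalConv_integrand {m : ℕ} {z : Fin (m + 1) → ℂ} (hz : ∀ j, 0 < (z j).re) :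
    Integrable (fun q : (Fin m → ℝ) × ℝ => (∏ j, causalExp (z j.castSucc) (q.1 j)) *
      causalExp (z (Fin.last m)) (q.2 - ∑ j, q.1 j)) (volume.prod volume) := by
  have hshear : MeasurePreserving (fun q : (Fin m → ℝ) × ℝ => (q.1, q.2 - ∑ j, q.1 j))
      (volume.prod volume) (volume.prod volume) :=
    (MeasurePreserving.id volume).skew_product (g := fun (s : Fin m → ℝ) (u : ℝ) => u - ∑ j, s j)
      (by fun_prop)
      (ae_of_all _ fun s => (measurePreserving_sub_right volume (∑ j, s j)).map_eq)
  exact hshear.integrable_comp_of_integrable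
    ((integrable_prod_causalExp fun j : Fin m => hz j.castSucc).mul_prod
      (integrable_causalExp (hz (Fin.last m))))

lemma integrable_causalConv {m : ℕ} {z : Fin (m + 1) → ℂ} (hz : ∀ j, 0 < (z j).re) :
    Integrable (causalConv z) :=
  (integrable_causalConv_integrand hz).integral_prod_right

lemma fourier_causalConv {m : ℕ} {z : Fin (m + 1) → ℂ} (hz : ∀ j, 0 < (z j).re) (w : ℝ) :
    𝓕 (causalConv z) w = ∏ j, (z j + 2 * Real.pi * w * I)⁻¹ := by
  simp_rw [← fourier_causalExp (hz _), Fin.prod_univ_castSucc, Real.fourier_real_eq_integral_exp_smul,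
    smul_eq_mul]
  rw [← integral_fintype_prod_volume_eq_prod, ← integral_mul_const]
  simp_rw [causalConv, ← integral_const_mul]
  rw [integral_integral_swap]
  · congr 1 with s
    rw [← integral_sub_right_eq_self
        (fun x : ℝ => (∏ j : Fin m, Complex.exp (↑(-2 * Real.pi * s j * w) * I) *
          causalExp (z j.castSucc) (s j)) *
          (Complex.exp (↑(-2 * Real.pi * x * w) * I) * causalExp (z (Fin.last m)) x))
        (∑ j, s j)]
    congr 1 with x
    have h : Complex.exp (↑(-2 * Real.pi * x * w) * I) =
        (∏ j : Fin m, Complex.exp (↑(-2 * Real.pi * s j * w) * I)) *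
          Complex.exp (↑(-2 * Real.pi * (x - ∑ j, s j) * w) * I) := by
      rw [← Complex.exp_sum, ← Complex.exp_add, ← Finset.sum_mul, ← Complex.ofReal_sum,
        ← add_mul, ← Complex.ofReal_add, ← Finset.sum_mul, ← Finset.mul_sum]
      ring_nf
    rw [h, Finset.prod_mul_distrib]
    ring
  · refine (integrable_causalConv_integrand hz).swap.bdd_mul (c := 1) ?_ ?_
    · exact Continuous.aestronglyMeasurable (by fun_prop)
    · exact ae_of_all _ fun q => (Complex.norm_exp_ofReal_mul_I _).le

lemma ae_sum_ne {ι : Type*} [Fintype ι] [Nonempty ι] (t : ℝ) :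
    ∀ᵐ s : ι → ℝ, ∑ j, s j ≠ t := by
  classical
  let L : (ι → ℝ) →ₗ[ℝ] ℝ := ∑ j, LinearMap.proj j
  have hL : ∀ s, L s = ∑ j, s j := fun s => by simp [L]
  let A : AffineSubspace ℝ (ι → ℝ) := (AffineSubspace.mk' t ⊥).comap L.toAffineMap
  have hA : ∀ s, s ∈ A ↔ ∑ j, s j = t := fun s => by
    simp [A, AffineSubspace.mem_mk', hL, sub_eq_zero]
  have hne : A ≠ ⊤ := fun h => by
    have h₁ := (hA (Pi.single (Classical.arbitrary ι) (t + 1))).1 (h ▸ AffineSubspace.mem_top ℝ _ _)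
    simp at h₁
  refine measure_mono_null (fun s hs => ?_) (Measure.addHaar_affineSubspace volume A hne)
  exact (hA s).2 (by simpa using hs)

lemma continuous_causalConv {m : ℕ} (hm : m ≠ 0) {z : Fin (m + 1) → ℂ}
    (hz : ∀ j, 0 < (z j).re) : Continuous (causalConv z) := by
  have : NeZero m := ⟨hm⟩
  have hprod := integrable_prod_causalExp fun j : Fin m => hz j.castSucc
  have hmeas : ∀ u : ℝ, Measurable fun s : Fin m → ℝ =>
      causalExp (z (Fin.last m)) (u - ∑ j, s j) := fun u =>
    (measurable_causalExp _).comp (measurable_const.sub (by fun_prop))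
  have hcont : ∀ t : ℝ, ∀ᵐ s : Fin m → ℝ, ContinuousAt (fun u =>
      (∏ j, causalExp (z j.castSucc) (s j)) * causalExp (z (Fin.last m)) (u - ∑ j, s j)) t := by
    intro t
    filter_upwards [ae_sum_ne t] with s hs
    have hsub : ContinuousAt (fun u => u - ∑ j, s j) t := by fun_prop
    exact continuousAt_const.mul
      ((continuousAt_causalExp _ (sub_ne_zero.2 hs.symm)).comp_of_eq hsub rfl)
  refine continuous_iff_continuousAt.2 fun t => ?_
  refine continuousAt_of_dominated (.of_forall fun u => hprod.1.mul (hmeas u).aestronglyMeasurable)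
    (.of_forall fun u => ae_of_all _ fun s => ?_) hprod.norm (hcont t)
  rw [norm_mul]
  exact mul_le_of_le_one_right (norm_nonneg _) (norm_causalExp_le_one (hz _).le _)

lemma freeKernel_eq_causalConv (m : ℕ) (t η : ℝ) (p : Fin (m + 1) → E3) :
    freeKernel m t p = (-I) ^ m * (Complex.exp ((η * t : ℝ)) *
      causalConv (fun j => η + ((‖p j‖ ^ 2 / 2 : ℝ) : ℂ) * I) t) := by
  rw [freeKernel, simplexInt, causalConv]
  congr 1
  rw [← integral_const_mul]
  congr 1 with s
  simp only [causalExp, Set.indicator_apply, Set.mem_ofPred_eq, Set.mem_Ici, sub_nonneg]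
  by_cases hs : ∀ j, 0 ≤ s j
  · by_cases ht : ∑ j, s j ≤ t
    · simp only [hs, ht, implies_true, and_self, if_true]
      rw [← Complex.exp_sum, ← Complex.exp_add, ← Complex.exp_add, Fin.sum_univ_castSucc]
      congr 1
      simp only [Fin.snoc_castSucc, Fin.snoc_last]
      have h : ∑ j : Fin m, -(η + ((‖p j.castSucc‖ ^ 2 / 2 : ℝ) : ℂ) * I) * (s j : ℂ) =
          -η * ∑ j, (s j : ℂ) - I * ∑ j, (s j : ℂ) * ((‖p j.castSucc‖ ^ 2 / 2 : ℝ) : ℂ) := by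
        rw [Finset.mul_sum, Finset.mul_sum, ← Finset.sum_sub_distrib]
        exact Finset.sum_congr rfl fun j _ => by ring
      rw [h]
      push_cast
      ring
    · simp [ht]
  · obtain ⟨j, hj⟩ := not_forall.1 hs
    rw [if_neg fun h => hs h.1, Finset.prod_eq_zero (Finset.mem_univ j) (if_neg hj)]
    simp

lemma resolvent_ne_zero {η : ℝ} (hη : 0 < η) (a α : ℝ) : (α : ℂ) - a + I * η ≠ 0 := fun h => by
  simpa [hη.ne'] using congrArg Complex.im h

lemma continuous_resolvent {η : ℝ} (hη : 0 < η) (a : ℝ) :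
    Continuous fun α : ℝ => ((α : ℂ) - a + I * η)⁻¹ :=
  Continuous.inv₀ (by fun_prop) (resolvent_ne_zero hη a)

lemma norm_resolvent_le {η : ℝ} (hη : 0 < η) (a α : ℝ) :
    ‖((α : ℂ) - a + I * η)⁻¹‖ ≤ η⁻¹ := by
  rw [norm_inv]
  refine inv_anti₀ hη ?_
  simpa [abs_of_pos hη] using Complex.abs_im_le_norm ((α : ℂ) - a + I * η)

lemma memLp_two_resolvent {η : ℝ} (hη : 0 < η) (a : ℝ) :
    MemLp (fun α : ℝ => ((α : ℂ) - a + I * η)⁻¹) 2 := by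
  rw [memLp_two_iff_integrable_sq_norm (continuous_resolvent hη a).aestronglyMeasurable]
  have h := ((integrable_inv_one_add_sq.comp_mul_left' (inv_ne_zero hη.ne')).comp_sub_right
    a).const_mul (η ^ 2)⁻¹
  refine h.congr (ae_of_all _ fun α => ?_)
  simp only [norm_inv, inv_pow, Complex.sq_norm, Complex.normSq_apply]
  simp only [add_re, sub_re, ofReal_re, mul_re, I_re, I_im, ofReal_im, add_im, sub_im, mul_im]
  rw [← mul_inv]
  congr 1
  field_simp
  ring

lemma integrable_prod_resolvent {m : ℕ} (hm : m ≠ 0) {η : ℝ} (hη : 0 < η)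
    (a : Fin (m + 1) → ℝ) :
    Integrable fun α : ℝ => ∏ j, ((α : ℂ) - a j + I * η)⁻¹ := by
  obtain ⟨k, rfl⟩ := Nat.exists_eq_succ_of_ne_zero hm
  simp_rw [Fin.prod_univ_succ, ← mul_assoc]
  refine ((memLp_two_resolvent hη _).integrable_mul (memLp_two_resolvent hη _)).mul_bdd
    (c := ∏ _j : Fin k, η⁻¹) ?_ (ae_of_all _ fun α => ?_)
  · exact (continuous_finsetProd _ fun j _ => continuous_resolvent hη _).aestronglyMeasurable
  · rw [norm_prod]
    exact Finset.prod_le_prod (fun _ _ => norm_nonneg _) fun j _ => norm_resolvent_le hη _ _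

lemma prod_inv_add_two_pi_mul_I {m : ℕ} (η : ℝ) (a : Fin (m + 1) → ℝ) (w : ℝ) :
    ∏ j, (η + (a j : ℂ) * I + 2 * Real.pi * w * I)⁻¹ =
      I ^ (m + 1) * ∏ j, (((-(2 * Real.pi) * w : ℝ) : ℂ) - a j + I * η)⁻¹ := by
  rw [← Fin.prod_const, ← Finset.prod_mul_distrib]
  refine Finset.prod_congr rfl fun j _ => ?_
  have h : (η + (a j : ℂ) * I + 2 * Real.pi * w * I) =
      I⁻¹ * (((-(2 * Real.pi) * w : ℝ) : ℂ) - a j + I * η) := by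
    rw [Complex.inv_I]
    push_cast
    linear_combination (η : ℂ) * Complex.I_sq
  rw [h, mul_inv, inv_inv]

lemma causalConv_eq_integral {m : ℕ} (hm : m ≠ 0) {η : ℝ} (hη : 0 < η) (a : Fin (m + 1) → ℝ)
    (t : ℝ) :
    causalConv (fun j => η + (a j : ℂ) * I) t = I ^ (m + 1) / (2 * Real.pi) *
      ∫ α : ℝ, Complex.exp (-I * α * t) * ∏ j, ((α : ℂ) - a j + I * η)⁻¹ := by
  have hz : ∀ j, 0 < ((η : ℂ) + (a j : ℂ) * I).re := fun j => by simpa using hη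
  have hF : 𝓕 (causalConv fun j => η + (a j : ℂ) * I) = fun w : ℝ =>
      I ^ (m + 1) * ∏ j, (((-(2 * Real.pi) * w : ℝ) : ℂ) - a j + I * η)⁻¹ := by
    ext w
    rw [fourier_causalConv hz, prod_inv_add_two_pi_mul_I]
  have hFint : Integrable (𝓕 (causalConv fun j => η + (a j : ℂ) * I)) := by
    rw [hF]
    exact ((integrable_prod_resolvent hm hη a).comp_mul_left'
      (neg_ne_zero.2 Real.two_pi_pos.ne')).const_mul _
  rw [← (integrable_causalConv hz).fourierInv_fourier_eq hFint
    (continuous_causalConv hm hz).continuousAt, hF, Real.fourierInv_eq']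
  have h := Measure.integral_comp_mul_left
    (fun α : ℝ => Complex.exp (-I * α * t) * ∏ j, ((α : ℂ) - a j + I * η)⁻¹) (-(2 * Real.pi))
  rw [inv_neg, abs_neg, abs_of_pos (inv_pos.2 Real.two_pi_pos), Complex.real_smul] at h
  calc _ = ∫ w : ℝ, I ^ (m + 1) * (Complex.exp (-I * ((-(2 * Real.pi) * w : ℝ) : ℂ) * t) *
          ∏ j, (((-(2 * Real.pi) * w : ℝ) : ℂ) - a j + I * η)⁻¹) := by
        congr 1 with w
        have he : (((2 * Real.pi * inner ℝ w t : ℝ) : ℂ) * I) =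
            -I * ((-(2 * Real.pi) * w : ℝ) : ℂ) * t := by
          simp only [RCLike.inner_apply, conj_trivial]
          push_cast
          ring
        rw [he, smul_eq_mul]
        ring
    _ = _ := by
        rw [integral_const_mul, h]
        push_cast
        ring

/-- α-representation of the free evolution kernel (Lemma 2.1, identity part):
for `m ≥ 1`, `t > 0`, `η > 0`, the function
`α ↦ e^{-iαt} ∏_j (α - |p_j|²/2 + iη)⁻¹` is absolutely integrable on `ℝ`, and
`K(t; p₀, …, p_m) = (i/(2π)) e^{ηt} ∫ e^{-iαt} ∏_j (α - |p_j|²/2 + iη)⁻¹ dα`. -/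
theorem alpha_representation (m : ℕ) (hm : 1 ≤ m) (t : ℝ) (ht : 0 < t)
    (η : ℝ) (hη : 0 < η) (p : Fin (m + 1) → E3) :
    Integrable (fun α : ℝ => Complex.exp (-Complex.I * α * t) *
      ∏ j : Fin (m + 1), ((α : ℂ) - ((‖p j‖ ^ 2 / 2 : ℝ) : ℂ) + Complex.I * η)⁻¹) ∧
    freeKernel m t p = Complex.I / (2 * Real.pi) * Complex.exp ((η * t : ℝ)) *
      ∫ α : ℝ, Complex.exp (-Complex.I * α * t) *
        ∏ j : Fin (m + 1), ((α : ℂ) - ((‖p j‖ ^ 2 / 2 : ℝ) : ℂ) + Complex.I * η)⁻¹ := by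
  have hm₀ : m ≠ 0 := Nat.one_le_iff_ne_zero.1 hm
  refine ⟨(integrable_prod_resolvent hm₀ hη _).bdd_mul (c := 1)
    (Continuous.aestronglyMeasurable (by fun_prop)) (ae_of_all _ fun α => ?_), ?_⟩
  · simp [Complex.norm_exp]
  · rw [freeKernel_eq_causalConv m t η p, causalConv_eq_integral hm₀ hη]
    have hI : (-I) ^ m * I ^ (m + 1) = I := by
      rw [pow_succ, ← mul_assoc, ← mul_pow]
      simp
    linear_combination (Complex.exp ((η * t : ℝ)) / (2 * Real.pi) *
      ∫ α : ℝ, Complex.exp (-I * α * t) *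
        ∏ j : Fin (m + 1), ((α : ℂ) - ((‖p j‖ ^ 2 / 2 : ℝ) : ℂ) + I * η)⁻¹) * hI
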